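/- arXiv:1003.4337 — 7 statements merged into one kernel-verified Lean document; each statement's English description precedes it below -/
import Mathlib

section
/- Let d ≥ 2 and let F be the flip operator on ℂ^d ⊗ ℂ^d (the matrix of order d² with entries F_{(i,j),(k,l)} = δ_{i,l} δ_{j,k}). For t ∈ [−1, 1], the (non-normalized) Werner state ρ_W(t) = I − t F is separable if and only if t ≤ 1/d. -/
open Matrix Kronecker

/-- The flip operator `F` on `ℂ^d ⊗ ℂ^d`, with entries `F_{(i,j),(k,l)} = δ_{i,l} δ_{j,k}`. -/
noncomputable def flipOp (d : ℕ) : Matrix (Fin d × Fin d) (Fin d × Fin d) ℂ :=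
  Matrix.of fun p q => if p.1 = q.2 ∧ p.2 = q.1 then 1 else 0

/-- A Hermitian matrix of order `d²` acting on `ℂ^d ⊗ ℂ^d` is separable if it is a finite
sum `∑ m, p m • (a m a m†) ⊗ (b m b m†)` with `p m ≥ 0`. -/
def SeparableState {d : ℕ} (ρ : Matrix (Fin d × Fin d) (Fin d × Fin d) ℂ) : Prop :=
  ∃ (m : ℕ) (p : Fin m → ℝ) (a b : Fin m → Fin d → ℂ),
    (∀ i, 0 ≤ p i) ∧
    ρ = ∑ i, (p i : ℂ) •
      (vecMulVec (a i) (star (a i)) ⊗ₖ vecMulVec (b i) (star (b i)))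

/-!
A separable matrix and its partial transpose are both positive semidefinite. For `I - t F` with
`d ≥ 2` the first condition gives `-1 ≤ t`, because of the minor on `{e_i ⊗ e_j, e_j ⊗ e_i}`, and
the second gives `t ≤ 1/d`, because the partial transpose compressed to the span of the `e_i ⊗ e_i`
is `I - t J`, with `J` the all-ones matrix.

Conversely, averaging `D u u† D† ⊗ D v v† D†` over diagonal phases `D` kills every entry outside
the positions `(ij, ij)` and `(ij, ji)`. Taking `v = 1` and summing over a Gram decomposition of a
positive semidefinite `G` yields a separable matrix with diagonal `G i i` and flip entries `G i j`;
adding a nonnegative diagonal matrix and choosing `G = c I - t J` gives `I - t F`.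
-/

section PartialTranspose

variable {m n R : Type*}

/-- The transposition `id ⊗ T` of the second tensor factor, on bipartite matrices indexed by pairs.
A separable matrix stays positive under it, which is the Peres criterion. -/
def partialTranspose (ρ : Matrix (m × n) (m × n) R) : Matrix (m × n) (m × n) R :=
  Matrix.of fun x y => ρ (x.1, y.2) (y.1, x.2)

theorem partialTranspose_kronecker [Mul R] (A : Matrix m m R) (B : Matrix n n R) :
    partialTranspose (A ⊗ₖ B) = A ⊗ₖ Bᵀ :=
  rfl

theorem partialTranspose_smul {S : Type*} [SMul S R] (c : S) (ρ : Matrix (m × n) (m × n) R) :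
    partialTranspose (c • ρ) = c • partialTranspose ρ :=
  rfl

theorem partialTranspose_sum [AddCommMonoid R] {ι : Type*} (s : Finset ι)
    (ρ : ι → Matrix (m × n) (m × n) R) :
    partialTranspose (∑ i ∈ s, ρ i) = ∑ i ∈ s, partialTranspose (ρ i) := by
  ext x y
  simp only [partialTranspose, of_apply, Matrix.sum_apply]

end PartialTranspose

namespace SeparableState

variable {d : ℕ} {ρ σ : Matrix (Fin d × Fin d) (Fin d × Fin d) ℂ}

theorem zero : SeparableState (0 : Matrix (Fin d × Fin d) (Fin d × Fin d) ℂ) :=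
  ⟨0, Fin.elim0, Fin.elim0, Fin.elim0, fun i => i.elim0, by simp⟩

theorem add (hρ : SeparableState ρ) (hσ : SeparableState σ) : SeparableState (ρ + σ) := by
  obtain ⟨m, p, a, b, hp, rfl⟩ := hρ
  obtain ⟨n, q, a', b', hq, rfl⟩ := hσ
  refine ⟨m + n, Fin.append p q, Fin.append a a', Fin.append b b',
    Fin.addCases (by simpa using hp) (by simpa using hq), ?_⟩
  simp only [Fin.sum_univ_add, Fin.append_left, Fin.append_right]

theorem sum {ι : Type*} {s : Finset ι} {f : ι → Matrix (Fin d × Fin d) (Fin d × Fin d) ℂ}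
    (hf : ∀ i ∈ s, SeparableState (f i)) : SeparableState (∑ i ∈ s, f i) :=
  Finset.sum_induction f SeparableState (fun _ _ => add) zero hf

theorem smul_kronecker {p : ℝ} (hp : 0 ≤ p) (a b : Fin d → ℂ) :
    SeparableState ((p : ℂ) • (vecMulVec a (star a) ⊗ₖ vecMulVec b (star b))) :=
  ⟨1, fun _ => p, fun _ => a, fun _ => b, fun _ => hp, by simp⟩

theorem partialTranspose (hρ : SeparableState ρ) : SeparableState (partialTranspose ρ) := by
  obtain ⟨m, p, a, b, hp, rfl⟩ := hρ
  refine ⟨m, p, a, star b, hp, ?_⟩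
  simp only [partialTranspose_sum, partialTranspose_smul, partialTranspose_kronecker,
    transpose_vecMulVec, Pi.star_apply, star_star]

open scoped ComplexOrder

theorem posSemidef (hρ : SeparableState ρ) : ρ.PosSemidef := by
  obtain ⟨m, p, a, b, hp, rfl⟩ := hρ
  refine posSemidef_sum _ fun i _ => PosSemidef.smul ?_ (Complex.zero_le_real.mpr (hp i))
  exact (posSemidef_vecMulVec_self_star (a i)).kronecker (posSemidef_vecMulVec_self_star (b i))

theorem diagonal {w : Fin d × Fin d → ℂ} (hw : 0 ≤ w) : SeparableState (diagonal w) := by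
  have basis_expansion : Matrix.diagonal w = ∑ x, ((w x).re : ℂ) •
      (vecMulVec (Pi.single x.1 1) (star (Pi.single x.1 1)) ⊗ₖ
        vecMulVec (Pi.single x.2 1) (star (Pi.single x.2 1))) := by
    rw [← sum_single_eq_diagonal]
    refine Finset.sum_congr rfl fun x _ => ?_
    rw [← Complex.eq_re_of_ofReal_le (hw x)]
    simp only [← Pi.single_star, star_one, ← single_eq_single_vecMulVec_single,
      single_kronecker_single, smul_single, mul_one, smul_eq_mul]
  rw [basis_expansion]
  exact .sum fun x _ => .smul_kronecker (Complex.le_def.mp (hw x)).1 _ _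

end SeparableState

section RankOne

open scoped ComplexOrder

variable {n 𝕜 : Type*} [Fintype n] [DecidableEq n] [RCLike 𝕜]

theorem posSemidef_dotProduct_smul_one_sub_vecMulVec (v : n → 𝕜) :
    ((star v ⬝ᵥ v) • 1 - vecMulVec v (star v)).PosSemidef := by
  rcases eq_or_ne v 0 with rfl | hv
  · simpa using PosSemidef.zero
  set s := star v ⬝ᵥ v with hs
  set L := s • 1 - vecMulVec v (star v) with hL
  have s_pos : 0 < s := dotProduct_star_self_pos_iff.mpr hv
  have gram : Lᴴ * L = s • L := by
    have star_s : star s = s := (IsSelfAdjoint.of_nonneg s_pos.le).star_eq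
    simp [hL, sub_mul, mul_sub, conjTranspose_vecMulVec, vecMulVec_mul_vecMulVec, star_s, ← hs]
  rw [← inv_smul_smul₀ s_pos.ne' L, ← gram]
  exact (posSemidef_conjTranspose_mul_self L).smul (RCLike.inv_pos_of_pos s_pos).le

theorem posSemidef_smul_one_sub_smul_vecMulVec_iff (v : n → 𝕜) {c t : 𝕜} (hc : 0 ≤ c) :
    (c • 1 - t • vecMulVec v (star v)).PosSemidef ↔ t * (star v ⬝ᵥ v) ≤ c := by
  rcases eq_or_ne v 0 with rfl | hv
  · simpa [hc] using PosSemidef.one.smul hc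
  set s := star v ⬝ᵥ v with hs
  have s_pos : 0 < s := dotProduct_star_self_pos_iff.mpr hv
  rw [← sub_nonneg]
  constructor
  · intro h
    have form_at_v : star v ⬝ᵥ (c • 1 - t • vecMulVec v (star v)) *ᵥ v = s * (c - t * s) := by
      simp only [sub_mulVec, smul_mulVec, one_mulVec, vecMulVec_mulVec, dotProduct_sub,
        dotProduct_smul, op_smul_eq_smul, ← hs, smul_eq_mul]
      ring
    have form_nonneg : 0 ≤ s * (c - t * s) := form_at_v ▸ h.dotProduct_mulVec_nonneg v
    exact le_of_mul_le_mul_left (by rwa [mul_zero]) s_pos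
  · intro h
    have split : c • 1 - t • vecMulVec v (star v) =
        s⁻¹ • (c • (s • 1 - vecMulVec v (star v)) + (c - t * s) • vecMulVec v (star v)) := by
      have := s_pos.ne'
      match_scalars <;> field_simp
      ring
    rw [split]
    exact (((posSemidef_dotProduct_smul_one_sub_vecMulVec v).smul hc).add
      ((posSemidef_vecMulVec_self_star v).smul h)).smul (RCLike.inv_pos_of_pos s_pos).le

end RankOne

/-- The local diagonal unitary invariant matrix
`∑ i j, A i j • |ij⟩⟨ij| + ∑ i ≠ j, B i j • |ij⟩⟨ji|` of a pair `(A, B)`.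
The diagonal of `B` is ignored. -/
def lduiMatrix {n R : Type*} [DecidableEq n] [Zero R] (A B : Matrix n n R) :
    Matrix (n × n) (n × n) R :=
  Matrix.of fun x y => if y = x then A x.1 x.2 else if y = x.swap then B x.1 x.2 else 0

theorem lduiMatrix_sum {n R ι : Type*} [DecidableEq n] [AddCommMonoid R] (s : Finset ι)
    (A B : ι → Matrix n n R) :
    lduiMatrix (∑ i ∈ s, A i) (∑ i ∈ s, B i) = ∑ i ∈ s, lduiMatrix (A i) (B i) := by
  ext x y
  simp only [lduiMatrix, of_apply, Matrix.sum_apply]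
  split_ifs <;> simp

-- Cube roots of unity are the shortest phases that work: signs would also give a nonzero sum when
-- `i = j` and `k = l`, since `1 + 1 = 0` in `ZMod 2`.
theorem sum_addChar_single_mul_single {n : Type*} [Fintype n] [DecidableEq n] (i j k l : n) :
    ∑ ψ : AddChar (n → ZMod 3) ℂ, ψ (Pi.single i 1) * ψ (Pi.single j 1) *
        star (ψ (Pi.single k 1) * ψ (Pi.single l 1)) =
      if i = k ∧ j = l ∨ i = l ∧ j = k then (Fintype.card (n → ZMod 3) : ℂ) else 0 := by
  have merge (ψ : AddChar (n → ZMod 3) ℂ) :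
      ψ (Pi.single i 1) * ψ (Pi.single j 1) * star (ψ (Pi.single k 1) * ψ (Pi.single l 1)) =
        ψ (Pi.single i 1 + Pi.single j 1 - (Pi.single k 1 + Pi.single l 1)) := by
    rw [sub_eq_add_neg, AddChar.map_add_eq_mul, AddChar.map_neg_eq_conj,
      AddChar.map_add_eq_mul, AddChar.map_add_eq_mul, starRingEnd_apply]
  have two_ne_zero : (1 + 1 : ZMod 3) ≠ 0 := by decide
  simp only [merge, AddChar.sum_apply_eq_ite, sub_eq_zero,
    Pi.single_add_single_eq_single_add_single one_ne_zero one_ne_zero, two_ne_zero, true_and,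
    false_and, or_false]

section LDUI

open scoped ComplexOrder MatrixOrder

variable {d : ℕ}

theorem lduiMatrix_vecMulVec_eq_sum_addChar (u v : Fin d → ℂ) :
    lduiMatrix (vecMulVec (u * star u) (v * star v))
        (vecMulVec (u * star v) (star (u * star v))) =
      ∑ ψ : AddChar (Fin d → ZMod 3) ℂ, (((Fintype.card (Fin d → ZMod 3) : ℝ)⁻¹ : ℝ) : ℂ) •
        (let φ : Fin d → ℂ := fun i => ψ (Pi.single i 1)
        vecMulVec (φ * u) (star (φ * u)) ⊗ₖ vecMulVec (φ * v) (star (φ * v))) := by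
  ext ⟨i, j⟩ ⟨k, l⟩
  set N : ℂ := (Fintype.card (Fin d → ZMod 3) : ℂ) with hN
  have N_ne_zero : N ≠ 0 := Nat.cast_ne_zero.mpr Fintype.card_ne_zero
  set z : ℂ := u i * v j * (star (u k) * star (v l)) with hz
  calc
    _ = if i = k ∧ j = l ∨ i = l ∧ j = k then z else 0 := by
      simp only [lduiMatrix, of_apply, vecMulVec_apply, Prod.mk.injEq, Prod.swap_prod_mk,
        Pi.mul_apply, Pi.star_apply, star_mul', star_star, hz]
      grind
    _ = N⁻¹ * z * if i = k ∧ j = l ∨ i = l ∧ j = k then N else 0 := by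
      rw [mul_ite, mul_zero, mul_right_comm, inv_mul_cancel₀ N_ne_zero, one_mul]
    _ = _ := by
      rw [hN, ← sum_addChar_single_mul_single, Finset.mul_sum, Matrix.sum_apply]
      refine Finset.sum_congr rfl fun ψ _ => ?_
      simp only [Matrix.smul_apply, kroneckerMap_apply, vecMulVec_apply, Pi.star_apply,
        Pi.mul_apply, star_mul', smul_eq_mul, Complex.ofReal_inv, Complex.ofReal_natCast, hz]
      ring

theorem separableState_lduiMatrix_vecMulVec (u v : Fin d → ℂ) :
    SeparableState (lduiMatrix (vecMulVec (u * star u) (v * star v))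
      (vecMulVec (u * star v) (star (u * star v)))) := by
  rw [lduiMatrix_vecMulVec_eq_sum_addChar]
  exact .sum fun ψ _ => .smul_kronecker (by positivity) _ _

theorem separableState_lduiMatrix_diag {G : Matrix (Fin d) (Fin d) ℂ} (hG : G.PosSemidef) :
    SeparableState (lduiMatrix (vecMulVec G.diag 1) G) := by
  obtain ⟨C, rfl⟩ := CStarAlgebra.nonneg_iff_eq_mul_star_self.mp hG.nonneg
  have gram : C * star C = ∑ k, vecMulVec (C.col k) (star (C.col k)) := by
    ext i j
    simp [mul_apply, Matrix.sum_apply, vecMulVec_apply, star_eq_conjTranspose]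
  have gram_diag : vecMulVec (C * star C).diag (1 : Fin d → ℂ) =
      ∑ k, vecMulVec (C.col k * star (C.col k)) 1 := by
    ext i j
    simp [mul_apply, Matrix.sum_apply, vecMulVec_apply, star_eq_conjTranspose]
  rw [gram_diag, gram, lduiMatrix_sum]
  exact .sum fun k _ => by simpa using separableState_lduiMatrix_vecMulVec (C.col k) 1

theorem separableState_lduiMatrix {A B G : Matrix (Fin d) (Fin d) ℂ} (hG : G.PosSemidef)
    (hA : ∀ i j, G i i ≤ A i j) (hB : ∀ i j, i ≠ j → B i j = G i j) :
    SeparableState (lduiMatrix A B) := by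
  have split : lduiMatrix A B = lduiMatrix (vecMulVec G.diag 1) G +
      diagonal fun x => A x.1 x.2 - G x.1 x.1 := by
    ext ⟨i, j⟩ ⟨k, l⟩
    simp only [lduiMatrix, of_apply, Matrix.add_apply, diagonal_apply, vecMulVec_apply, diag_apply,
      Prod.mk.injEq, Prod.swap_prod_mk, Pi.one_apply]
    grind
  rw [split]
  exact (separableState_lduiMatrix_diag hG).add
    (.diagonal fun x => sub_nonneg.mpr (hA x.1 x.2))

end LDUI

section Werner

open scoped ComplexOrder

variable {d : ℕ} {t : ℝ}

theorem one_sub_smul_flipOp_eq_lduiMatrix (d : ℕ) (t : ℂ) :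
    1 - t • flipOp d =
      lduiMatrix (Matrix.of fun i j => if i = j then 1 - t else 1) (Matrix.of fun _ _ => -t) := by
  ext ⟨i, j⟩ ⟨k, l⟩
  simp only [flipOp, lduiMatrix, Matrix.sub_apply, Matrix.smul_apply, of_apply, one_apply,
    Prod.mk.injEq, Prod.swap_prod_mk, smul_eq_mul]
  grind

theorem posSemidef_smul_one_sub_smul_ones_iff {c : ℝ} (hc : 0 ≤ c) :
    ((c : ℂ) • (1 : Matrix (Fin d) (Fin d) ℂ) - (t : ℂ) • vecMulVec 1 (star 1)).PosSemidef ↔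
      t * d ≤ c := by
  rw [posSemidef_smul_one_sub_smul_vecMulVec_iff 1 (Complex.zero_le_real.mpr hc), star_one,
    one_dotProduct_one, Fintype.card_fin]
  norm_cast

theorem neg_one_le_of_separableState_one_sub_smul_flipOp (hd : 2 ≤ d)
    (h : SeparableState (1 - (t : ℂ) • flipOp d)) : -1 ≤ t := by
  have : Nontrivial (Fin d) := Fin.nontrivial_iff_two_le.mpr hd
  obtain ⟨i, j, hij⟩ := exists_pair_ne (Fin d)
  have minor : (1 - (t : ℂ) • flipOp d).submatrix ![(i, j), (j, i)] ![(i, j), (j, i)] =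
      !![1, -(t : ℂ); -(t : ℂ), 1] := by
    ext a b
    fin_cases a <;> fin_cases b <;> simp [flipOp, one_apply, hij, hij.symm]
  have det_nonneg := (h.posSemidef.submatrix ![(i, j), (j, i)]).det_nonneg
  rw [minor, det_fin_two_of] at det_nonneg
  have sq_le_one : 0 ≤ 1 * 1 - -t * -t := by exact_mod_cast det_nonneg
  nlinarith

theorem mul_le_one_of_separableState_one_sub_smul_flipOp
    (h : SeparableState (1 - (t : ℂ) • flipOp d)) : t * d ≤ 1 := by
  have compression : (partialTranspose (1 - (t : ℂ) • flipOp d)).submatrix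
      (fun i => (i, i)) (fun i => (i, i)) =
      ((1 : ℝ) : ℂ) • (1 : Matrix (Fin d) (Fin d) ℂ) - (t : ℂ) • vecMulVec 1 (star 1) := by
    ext i j
    simp [flipOp, partialTranspose, one_apply, eq_comm]
  rw [← posSemidef_smul_one_sub_smul_ones_iff zero_le_one, ← compression]
  exact h.partialTranspose.posSemidef.submatrix _

theorem separableState_one_sub_smul_flipOp (ht : -1 ≤ t) (htd : t * d ≤ 1) :
    SeparableState (1 - (t : ℂ) • flipOp d) := by
  -- The least `c` for which `c I - t J` is positive semidefinite.
  set c : ℝ := max 0 (t * d)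
  have c_le_one : c ≤ 1 := max_le zero_le_one htd
  have c_le_one_add : c ≤ 1 + t := by
    refine max_le (by linarith) ?_
    rcases le_total 0 t with t_nonneg | t_nonpos
    · linarith
    · linarith [mul_nonpos_of_nonpos_of_nonneg t_nonpos d.cast_nonneg]
  have gram := (posSemidef_smul_one_sub_smul_ones_iff (le_max_left 0 (t * d))).mpr
    (le_max_right 0 (t * d))
  rw [one_sub_smul_flipOp_eq_lduiMatrix]
  refine separableState_lduiMatrix gram (fun i j => ?_) (fun i j hij => ?_)
  · simp only [Matrix.sub_apply, Matrix.smul_apply, one_apply_eq, vecMulVec_apply, Pi.one_apply,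
      star_one, smul_eq_mul, mul_one, of_apply]
    split_ifs <;> norm_cast <;> linarith
  · simp [hij]

end Werner

theorem werner_separable_iff_general (d : ℕ) (hd : 2 ≤ d) (t : ℝ) :
    SeparableState ((1 : Matrix (Fin d × Fin d) (Fin d × Fin d) ℂ) - (t : ℂ) • flipOp d) ↔
      t ∈ Set.Icc (-1 : ℝ) (1 / d) := by
  have d_pos : (0 : ℝ) < d := by positivity
  rw [Set.mem_Icc, le_div_iff₀ d_pos]
  exact ⟨fun h => ⟨neg_one_le_of_separableState_one_sub_smul_flipOp hd h,
      mul_le_one_of_separableState_one_sub_smul_flipOp h⟩,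
    fun ⟨ht, htd⟩ => separableState_one_sub_smul_flipOp ht htd⟩

/-- For `d ≥ 2` and `t ∈ [-1,1]`, the Werner state `ρ_W(t) = I - t F` is separable
if and only if `t ≤ 1/d`. -/
theorem werner_separable_iff (d : ℕ) (hd : 2 ≤ d) (t : ℝ) (ht : t ∈ Set.Icc (-1 : ℝ) 1) :
    SeparableState ((1 : Matrix (Fin d × Fin d) (Fin d × Fin d) ℂ) - (t : ℂ) • flipOp d) ↔
      t ≤ 1 / d :=
  (werner_separable_iff_general d hd t).trans (and_iff_right ht.1)
end

section
/- Let d ≥ 2 and let P be the matrix of order d² with entries P_{(i,j),(k,l)} = (1/d) δ_{i,j} δ_{k,l}. For t ∈ [−1, 1], there exist vectors x, y, u, v ∈ ℂ^d such that the vector ψ = x ⊗ u + y ⊗ v ∈ ℂ^d ⊗ ℂ^d satisfies ⟨ψ| (I − t d P) |ψ⟩ < 0 if and only if 1/2 < t. (Equivalently, the Werner state ρ_W(t) = I − t F is 1-distillable if and only if 1/2 < t ≤ 1.) -/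
open Matrix

/-- The matrix `P` with entries `P_{(i,j),(k,l)} = (1/d) δ_{i,j} δ_{k,l}`. -/
noncomputable def projME (d : ℕ) : Matrix (Fin d × Fin d) (Fin d × Fin d) ℂ :=
  Matrix.of fun p q => if p.1 = p.2 ∧ q.1 = q.2 then 1 / (d : ℂ) else 0

/-!
Write a vector `ψ ∈ ℂ^d ⊗ ℂ^d` as a `d × d` matrix `A`. Its Schmidt rank is the rank of `A`, its
norm is the Frobenius norm `‖A‖`, and `d P` is the rank-one operator attached to the vectorized
identity, so `⟨ψ| (I - t d P) |ψ⟩ = ‖A‖² - t |tr A|²`. If `Q` is the orthogonal projection onto the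
range of `A`, then `tr A = tr (Qᴴ A)`, and the Cauchy–Schwarz inequality gives
`|tr A|² ≤ ‖Q‖² ‖A‖² = rank A · ‖A‖²`, with equality when `A` is itself an orthogonal projection.
-/

section FrobeniusNorm

open scoped Matrix.Norms.Frobenius

variable {𝕜 m n : Type*} [RCLike 𝕜] [Fintype m] [Fintype n]

lemma norm_toLp_vec (A : Matrix m n 𝕜) : ‖WithLp.toLp 2 (vec A)‖ = ‖A‖ := by
  simp only [EuclideanSpace.norm_eq, frobenius_norm_def, Real.sqrt_eq_rpow, Real.rpow_two,
    vec, Fintype.sum_prod_type_right]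

lemma norm_trace_conjTranspose_mul_le (A B : Matrix m n 𝕜) :
    ‖(Aᴴ * B).trace‖ ≤ ‖A‖ * ‖B‖ := by
  rw [← star_vec_dotProduct_vec, dotProduct_comm, ← EuclideanSpace.inner_toLp_toLp,
    ← norm_toLp_vec A, ← norm_toLp_vec B]
  exact norm_inner_le_norm _ _

lemma trace_conjTranspose_mul_self_eq_norm_sq (A : Matrix m n 𝕜) :
    (Aᴴ * A).trace = (‖A‖ : 𝕜) ^ 2 := by
  rw [← star_vec_dotProduct_vec, dotProduct_comm, ← EuclideanSpace.inner_toLp_toLp,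
    inner_self_eq_norm_sq_to_K, norm_toLp_vec]

lemma exists_isStarProjection_trace_eq_rank_mul_eq_self (A : Matrix m n 𝕜) :
    ∃ Q : Matrix m m 𝕜, IsStarProjection Q ∧ Q.trace = A.rank ∧ Q * A = A := by
  classical
  set K := LinearMap.range (toEuclideanLin A) with hK
  have hrank : A.rank = Module.finrank 𝕜 K := by
    rw [hK, toEuclideanLin, toLpLin_eq_toLin]
    exact A.rank_eq_finrank_range_toLin _ _
  set Q : Matrix m m 𝕜 := (toEuclideanCLM (n := m) (𝕜 := 𝕜)).symm K.starProjection with hQ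
  have hQK : toEuclideanLin Q = K.starProjection := by
    rw [← coe_toEuclideanCLM_eq_toEuclideanLin, hQ, StarAlgEquiv.apply_symm_apply]
  have hproj : LinearMap.IsProj K (K.starProjection : EuclideanSpace 𝕜 m →ₗ[𝕜] _) :=
    ⟨K.starProjection_apply_mem, fun _ => Submodule.starProjection_eq_self_iff.mpr⟩
  refine ⟨Q, isStarProjection_starProjection.map (toEuclideanCLM (n := m) (𝕜 := 𝕜)).symm, ?_, ?_⟩
  · rw [hrank, ← hproj.trace, ← hQK, toEuclideanLin, toLpLin_eq_toLin, trace_toLin_eq]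
  · apply toEuclideanLin.injective
    ext1 x
    rw [toLpLin_mul_same, hQK]
    exact hproj.map_id _ (LinearMap.mem_range_self _ x)

lemma norm_sq_eq_re_trace_of_isStarProjection {Q : Matrix m m 𝕜} (hQ : IsStarProjection Q) :
    ‖Q‖ ^ 2 = RCLike.re Q.trace := by
  have h : Q.trace = (‖Q‖ : 𝕜) ^ 2 := by
    rw [← trace_conjTranspose_mul_self_eq_norm_sq, ← star_eq_conjTranspose,
      hQ.isSelfAdjoint.star_eq, hQ.isIdempotentElem.eq]
  rw [h, ← RCLike.ofReal_pow, RCLike.ofReal_re]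

theorem norm_trace_sq_le_rank_mul_norm_sq (A : Matrix n n 𝕜) :
    ‖A.trace‖ ^ 2 ≤ A.rank * ‖A‖ ^ 2 := by
  obtain ⟨Q, hQ, htrace, hQA⟩ := exists_isStarProjection_trace_eq_rank_mul_eq_self A
  have hnorm : ‖Q‖ ^ 2 = A.rank := by
    rw [norm_sq_eq_re_trace_of_isStarProjection hQ, htrace, RCLike.natCast_re]
  have hA : Qᴴ * A = A := by
    rw [← star_eq_conjTranspose, hQ.isSelfAdjoint.star_eq, hQA]
  calc ‖A.trace‖ ^ 2 = ‖(Qᴴ * A).trace‖ ^ 2 := by rw [hA]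
    _ ≤ (‖Q‖ * ‖A‖) ^ 2 := by gcongr; exact norm_trace_conjTranspose_mul_le Q A
    _ = A.rank * ‖A‖ ^ 2 := by rw [mul_pow, hnorm]

lemma mul_norm_trace_sq_le_norm_sq {A : Matrix n n 𝕜} {k : ℕ} (hA : A.rank ≤ k) {t : ℝ}
    (hkt : k * t ≤ 1) : t * ‖A.trace‖ ^ 2 ≤ ‖A‖ ^ 2 := by
  rcases le_total t 0 with ht | ht
  · exact (mul_nonpos_of_nonpos_of_nonneg ht (sq_nonneg _)).trans (sq_nonneg _)
  · calc t * ‖A.trace‖ ^ 2 ≤ t * (A.rank * ‖A‖ ^ 2) := by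
          gcongr; exact norm_trace_sq_le_rank_mul_norm_sq A
      _ ≤ t * (k * ‖A‖ ^ 2) := by gcongr
      _ = k * t * ‖A‖ ^ 2 := by ring
      _ ≤ ‖A‖ ^ 2 := mul_le_of_le_one_left (sq_nonneg _) hkt

end FrobeniusNorm

lemma exists_isStarProjection_transpose_mul_self {m n : Type*} (R : Type*) [Fintype m] [Fintype n]
    [CommSemiring R] [StarRing R] (h : Fintype.card m ≤ Fintype.card n) :
    ∃ U : Matrix m n R, IsStarProjection (Uᵀ * U) ∧ (Uᵀ * U).trace = Fintype.card m := by
  classical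
  obtain ⟨f⟩ := Function.Embedding.nonempty_of_card_le h
  set U : Matrix m n R := (1 : Matrix n n R).submatrix f id with hU
  have hUstar : Uᴴ = Uᵀ := by
    rw [hU, conjTranspose_submatrix, conjTranspose_one, transpose_submatrix, transpose_one]
  have hUU : U * Uᵀ = 1 := by
    ext i j
    simp [hU, mul_apply, one_apply]
  refine ⟨U, ⟨?_, ?_⟩, ?_⟩
  · rw [IsIdempotentElem, Matrix.mul_assoc, ← Matrix.mul_assoc U, hUU, Matrix.one_mul]
  · rw [← hUstar]
    exact isHermitian_conjTranspose_mul_self U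
  · rw [trace_mul_comm, hUU, trace_one]

/-- The vector `∑ₛ xₛ ⊗ uₛ` of the tensor product, in coordinates. With `k` indices `s`, these are
the vectors of Schmidt rank at most `k`. -/
def tensorSum {ι m n R : Type*} [Fintype ι] [NonUnitalNonAssocSemiring R] (x : ι → m → R)
    (u : ι → n → R) : m × n → R :=
  fun p => ∑ s, x s p.1 * u s p.2

lemma tensorSum_pair {m n R : Type*} [NonUnitalNonAssocSemiring R] (x y : m → R) (u v : n → R) :
    tensorSum ![x, y] ![u, v] = fun p => x p.1 * u p.2 + y p.1 * v p.2 :=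
  funext fun _ => Fin.sum_univ_two _

lemma tensorSum_eq_vec {ι m n R : Type*} [Fintype ι] [NonUnitalCommSemiring R] (x : ι → m → R)
    (u : ι → n → R) : tensorSum x u = vec ((of u)ᵀ * of x) := by
  ext p
  simp only [tensorSum, vec, mul_apply, transpose_apply, of_apply, mul_comm]

lemma natCast_smul_projME (d : ℕ) :
    (d : ℂ) • projME d = vecMulVec (vec 1) (star (vec 1)) := by
  ext ⟨i, j⟩ ⟨k, l⟩
  have hd : (d : ℂ) ≠ 0 := by exact_mod_cast i.pos.ne'
  simp [projME, vecMulVec_apply, vec, one_apply, hd, ← ite_and, and_comm, eq_comm]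

section SchmidtRank

open scoped Matrix.Norms.Frobenius

lemma re_star_vec_dotProduct_one_sub_projME_mulVec_vec {d : ℕ} (t : ℝ)
    (A : Matrix (Fin d) (Fin d) ℂ) :
    (star (vec A) ⬝ᵥ ((1 - (t : ℂ) • ((d : ℂ) • projME d)) *ᵥ vec A)).re =
      ‖A‖ ^ 2 - t * ‖A.trace‖ ^ 2 := by
  have hright : star (vec 1) ⬝ᵥ vec A = A.trace := by
    rw [star_vec_dotProduct_vec, conjTranspose_one, one_mul]
  have hleft : star (vec A) ⬝ᵥ vec 1 = star A.trace := by
    rw [star_vec_dotProduct_vec, mul_one, trace_conjTranspose]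
  have hnorm : (Aᴴ * A).trace = (‖A‖ : ℂ) ^ 2 := trace_conjTranspose_mul_self_eq_norm_sq A
  have hform : star (vec A) ⬝ᵥ ((1 - (t : ℂ) • ((d : ℂ) • projME d)) *ᵥ vec A) =
      (‖A‖ : ℂ) ^ 2 - t * (star A.trace * A.trace) := by
    rw [natCast_smul_projME, sub_mulVec, one_mulVec, smul_mulVec, vecMulVec_mulVec, hright,
      dotProduct_sub, dotProduct_smul, dotProduct_smul, hleft, star_vec_dotProduct_vec,
      hnorm, smul_eq_mul, MulOpposite.smul_eq_mul_unop, MulOpposite.unop_op]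
  rw [hform, Complex.star_def, Complex.conj_mul']
  norm_cast

theorem werner_oneDistillable_iff_general {k d : ℕ} (hkd : k ≤ d) (t : ℝ) :
    (∃ x u : Fin k → Fin d → ℂ,
      (star (tensorSum x u) ⬝ᵥ
        ((1 - (t : ℂ) • ((d : ℂ) • projME d)) *ᵥ tensorSum x u)).re < 0) ↔ 1 < k * t := by
  simp only [tensorSum_eq_vec, re_star_vec_dotProduct_one_sub_projME_mulVec_vec]
  constructor
  · rintro ⟨x, u, hneg⟩
    have hrank : ((of u)ᵀ * of x).rank ≤ k := (rank_mul_le_left _ _).trans (rank_le_width _)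
    by_contra! hkt
    exact hneg.not_ge (sub_nonneg.mpr (mul_norm_trace_sq_le_norm_sq hrank hkt))
  · intro hkt
    obtain ⟨U, hU, htrace⟩ :=
      exists_isStarProjection_transpose_mul_self (m := Fin k) (n := Fin d) ℂ (by simpa using hkd)
    rw [Fintype.card_fin] at htrace
    have hk : (0 : ℝ) < k := by
      refine Nat.cast_pos.mpr (Nat.pos_of_ne_zero ?_)
      rintro rfl
      norm_num at hkt
    refine ⟨U, U, ?_⟩
    calc ‖Uᵀ * U‖ ^ 2 - t * ‖(Uᵀ * U).trace‖ ^ 2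
        = k * (1 - k * t) := by
          rw [norm_sq_eq_re_trace_of_isStarProjection hU, htrace, RCLike.natCast_re,
            Complex.norm_natCast]
          ring
      _ < 0 := mul_neg_of_pos_of_neg hk (sub_neg.mpr hkt)

end SchmidtRank

/-- For `d ≥ 2` and `t ∈ [-1,1]`: there exist `x, y, u, v ∈ ℂ^d` such that
`ψ = x ⊗ u + y ⊗ v` satisfies `⟨ψ| (I - t d P) |ψ⟩ < 0` iff `1/2 < t`; i.e. the Werner
state `ρ_W(t)` is 1-distillable iff `1/2 < t`. -/
theorem werner_oneDistillable_iff (d : ℕ) (hd : 2 ≤ d) (t : ℝ)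
    (ht : t ∈ Set.Icc (-1 : ℝ) 1) :
    (∃ x y u v : Fin d → ℂ,
      ((star (fun p : Fin d × Fin d => x p.1 * u p.2 + y p.1 * v p.2)) ⬝ᵥ
        (((1 : Matrix (Fin d × Fin d) (Fin d × Fin d) ℂ) - (t : ℂ) • ((d : ℂ) • projME d)) *ᵥ
          fun p : Fin d × Fin d => x p.1 * u p.2 + y p.1 * v p.2)).re < 0) ↔
      1 / 2 < t := by
  rw [div_lt_iff₀' two_pos]
  simpa [Fin.exists_fin_succ_pi, tensorSum_pair] using werner_oneDistillable_iff_general hd t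
end

section
/- For all unitary d×d matrices A, B and all complex d×d matrices X, Y: H(AXB, AYB) = (I₂ ⊗ B† ⊗ A*) H(X,Y) (I₂ ⊗ B ⊗ Aᵀ), where ⊗ is the Kronecker product, A* the entrywise conjugate, and B† the conjugate transpose. -/
open Matrix Kronecker
open scoped ComplexOrder

/-- `vec(Z)`: the column vector (indexed by `(column, row)` in column-stacking order)
obtained by stacking the columns of `Z`. -/
def vecCol {d : ℕ} (Z : Matrix (Fin d) (Fin d) ℂ) : Fin d × Fin d → ℂ :=
  fun p => Z p.2 p.1

/-- The hermitian matrix `H(X,Y) = H₁ - ½(H₂ + H₃) + ¼H₄` of order `2d²`, where in 2×2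
block form (blocks of order `d²`, block indices from `![X, Y]`):
`H₁ = [[‖X‖², tr(X†Y)],[tr(Y†X), ‖Y‖²]] ⊗ I_{d²}`, `H₂ = [[X†X, X†Y],[Y†X, Y†Y]] ⊗ I_d`,
`H₃` has blocks `I_d ⊗ (entrywise conj)·(transpose)`, and `H₄` has blocks
`vec(·)* vec(·)ᵀ`. -/
noncomputable def Hmat {d : ℕ} (X Y : Matrix (Fin d) (Fin d) ℂ) :
    Matrix (Fin 2 × Fin d × Fin d) (Fin 2 × Fin d × Fin d) ℂ :=
  Matrix.of fun p q =>
    ((![X, Y] p.1)ᴴ * ![X, Y] q.1).trace * (if p.2 = q.2 then 1 else 0)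
    - (1 / 2) * (((![X, Y] p.1)ᴴ * ![X, Y] q.1) p.2.1 q.2.1 *
          (if p.2.2 = q.2.2 then 1 else 0)
        + (if p.2.1 = q.2.1 then 1 else 0) *
          ((![X, Y] p.1)ᴴᵀ * (![X, Y] q.1)ᵀ) p.2.2 q.2.2)
    + (1 / 4) * ((starRingEnd ℂ) (vecCol (![X, Y] p.1) p.2) * vecCol (![X, Y] q.1) q.2)

/-!
With `K = B ⊗ Aᵀ`, which is unitary, each block of `H` transforms by the congruence `M ↦ K† M K`,
and so does each of its four terms. In the first the trace is invariant and `K† K = 1`; in the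
next two one of `A`, `B` cancels inside the product `X†Y` or `X*Yᵀ`, while the other cancels in the
identity tensor factor; the last follows from `vec(AYB)ᵀ = vec(Y)ᵀ K`, which holds for all `A`, `B`.
-/

section Gram

variable {R k l m n : Type*} [CommRing R] [StarRing R] [Fintype m] [Fintype n]

theorem conjTranspose_mul_mul_mul_of_isometry [Fintype l] [DecidableEq m]
    {A : Matrix l m R} (hA : Aᴴ * A = 1) (B : Matrix n k R) (X Y : Matrix m n R) :
    (A * X * B)ᴴ * (A * Y * B) = Bᴴ * (Xᴴ * Y) * B :=
  calc
    (A * X * B)ᴴ * (A * Y * B) = Bᴴ * (Xᴴ * (Aᴴ * A * Y)) * B := by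
      simp only [conjTranspose_mul, Matrix.mul_assoc]
    _ = Bᴴ * (Xᴴ * Y) * B := by rw [hA, Matrix.one_mul]

theorem trace_conjTranspose_mul_of_isometry [Fintype k] [Fintype l] [DecidableEq m]
    [DecidableEq n] {A : Matrix l m R} {B : Matrix n k R} (hA : Aᴴ * A = 1) (hB : B * Bᴴ = 1)
    (X Y : Matrix m n R) :
    ((A * X * B)ᴴ * (A * Y * B)).trace = (Xᴴ * Y).trace := by
  rw [conjTranspose_mul_mul_mul_of_isometry hA, trace_mul_cycle, hB, Matrix.one_mul]

theorem vecMulVec_star_vec_mul_mul (A : Matrix l m R) (B : Matrix n k R) (X Y : Matrix m n R) :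
    vecMulVec (star (vec (A * X * B))) (vec (A * Y * B)) =
      (B ⊗ₖ Aᵀ)ᴴ * vecMulVec (star (vec X)) (vec Y) * (B ⊗ₖ Aᵀ) := by
  have vec_mul_mul (Z : Matrix m n R) : vec (A * Z * B) = vec Z ᵥ* (B ⊗ₖ Aᵀ) := by
    rw [vec_vecMul_kronecker, transpose_transpose]
  rw [vec_mul_mul, vec_mul_mul, star_vecMul, mul_vecMulVec, vecMulVec_mul]

end Gram

theorem one_kronecker_mul_comp_mul_one_kronecker {R ι k l m n : Type*} [Semiring R] [Fintype ι]
    [DecidableEq ι] [Fintype m] [Fintype n] (C : Matrix l m R) (D : Matrix n k R)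
    (M : Matrix ι ι (Matrix m n R)) :
    ((1 : Matrix ι ι R) ⊗ₖ C) * comp ι ι m n R M * ((1 : Matrix ι ι R) ⊗ₖ D) =
      comp ι ι l k R (of fun i j => C * M i j * D) := by
  ext ⟨i, p⟩ ⟨j, q⟩
  simp [Matrix.mul_apply, Fintype.sum_prod_type, one_apply, Finset.sum_ite_irrel]

section Hblock

variable {𝕜 ι m n : Type*} [RCLike 𝕜] [Fintype m] [Fintype n] [DecidableEq m] [DecidableEq n]

/-- The block of order `mn` that a pair `(X, Y)` of `m × n` matrices contributes to `H`: every block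
of `Hmat X Y` is of this form, the diagonal ones coming from `(X, X)` and `(Y, Y)`. The entrywise
conjugate `X*` is encoded as `Xᴴᵀ`. -/
noncomputable def Hblock (X Y : Matrix m n 𝕜) : Matrix (n × m) (n × m) 𝕜 :=
  (Xᴴ * Y).trace • 1
    - (1 / 2 : 𝕜) • ((Xᴴ * Y) ⊗ₖ (1 : Matrix m m 𝕜) + (1 : Matrix n n 𝕜) ⊗ₖ (Xᴴᵀ * Yᵀ))
    + (1 / 4 : 𝕜) • vecMulVec (star (vec X)) (vec Y)

/-- The matrix `H` of a family `Z` of `m × n` matrices, with `Hblock (Z i) (Z j)` as its `(i, j)`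
block; `Hmat X Y` is the case of the family `![X, Y]`. -/
noncomputable def Hfamily (Z : ι → Matrix m n 𝕜) : Matrix (ι × n × m) (ι × n × m) 𝕜 :=
  comp ι ι (n × m) (n × m) 𝕜 (of fun i j => Hblock (Z i) (Z j))

theorem Hblock_unitary_transform {A : Matrix m m 𝕜} {B : Matrix n n 𝕜}
    (hA : A ∈ unitaryGroup m 𝕜) (hB : B ∈ unitaryGroup n 𝕜) (X Y : Matrix m n 𝕜) :
    Hblock (A * X * B) (A * Y * B) = (Bᴴ ⊗ₖ Aᴴᵀ) * Hblock X Y * (B ⊗ₖ Aᵀ) := by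
  have hA' : Aᴴ * A = 1 := mem_unitaryGroup_iff'.1 hA
  have hB' : Bᴴ * B = 1 := mem_unitaryGroup_iff'.1 hB
  have hAt : Aᴴᵀ * Aᵀ = 1 := mem_unitaryGroup_iff'.1 (transpose_mem_unitaryGroup_iff.2 hA)
  have hBt : Bᵀᴴ * Bᵀ = 1 := mem_unitaryGroup_iff'.1 (transpose_mem_unitaryGroup_iff.2 hB)
  have trace_term : ((A * X * B)ᴴ * (A * Y * B)).trace = (Xᴴ * Y).trace :=
    trace_conjTranspose_mul_of_isometry hA' (mem_unitaryGroup_iff.1 hB) X Y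
  have gram_term : (A * X * B)ᴴ * (A * Y * B) = Bᴴ * (Xᴴ * Y) * B :=
    conjTranspose_mul_mul_mul_of_isometry hA' B X Y
  have conj_gram_term : (A * X * B)ᴴᵀ * (A * Y * B)ᵀ = Aᴴᵀ * (Xᴴᵀ * Yᵀ) * Aᵀ := by
    simpa only [← conjTranspose_transpose_eq_transpose_conjTranspose, transpose_mul,
      ← Matrix.mul_assoc] using conjTranspose_mul_mul_mul_of_isometry hBt Aᵀ Xᵀ Yᵀ
  have vec_term : vecMulVec (star (vec (A * X * B))) (vec (A * Y * B)) =
      (Bᴴ ⊗ₖ Aᴴᵀ) * vecMulVec (star (vec X)) (vec Y) * (B ⊗ₖ Aᵀ) := by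
    rw [vecMulVec_star_vec_mul_mul, conjTranspose_kronecker,
      conjTranspose_transpose_eq_transpose_conjTranspose]
  rw [Hblock, trace_term, gram_term, conj_gram_term, vec_term, Hblock]
  simp only [Matrix.mul_add, Matrix.mul_sub, Matrix.add_mul, Matrix.sub_mul, Matrix.mul_smul,
    Matrix.smul_mul, ← mul_kronecker_mul, Matrix.mul_one, hAt, hB', one_kronecker_one]

theorem Hmat_unitary_transform_general [Fintype ι] [DecidableEq ι] {A : Matrix m m 𝕜}
    {B : Matrix n n 𝕜} (hA : A ∈ unitaryGroup m 𝕜) (hB : B ∈ unitaryGroup n 𝕜)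
    (Z : ι → Matrix m n 𝕜) :
    Hfamily (fun i => A * Z i * B) =
      ((1 : Matrix ι ι 𝕜) ⊗ₖ (Bᴴ ⊗ₖ Aᴴᵀ)) * Hfamily Z * ((1 : Matrix ι ι 𝕜) ⊗ₖ (B ⊗ₖ Aᵀ)) := by
  simp only [Hfamily, Hblock_unitary_transform hA hB, one_kronecker_mul_comp_mul_one_kronecker,
    of_apply]

end Hblock

theorem Hmat_eq_Hfamily {d : ℕ} (X Y : Matrix (Fin d) (Fin d) ℂ) :
    Hmat X Y = Hfamily ![X, Y] := by
  ext ⟨i, p⟩ ⟨j, q⟩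
  simp only [Hmat, vecCol, Hfamily, Hblock, comp_apply, of_apply, Matrix.add_apply,
    Matrix.sub_apply, Matrix.smul_apply, smul_eq_mul, kroneckerMap_apply, one_apply,
    vecMulVec_apply, Pi.star_apply, vec, starRingEnd_apply]

/-- For unitary `A, B`: `H(AXB, AYB) = (I₂ ⊗ B† ⊗ A*) H(X,Y) (I₂ ⊗ B ⊗ Aᵀ)`. -/
theorem Hmat_unitary_transform (d : ℕ) (A B : Matrix (Fin d) (Fin d) ℂ)
    (hA : A ∈ Matrix.unitaryGroup (Fin d) ℂ) (hB : B ∈ Matrix.unitaryGroup (Fin d) ℂ)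
    (X Y : Matrix (Fin d) (Fin d) ℂ) :
    Hmat (A * X * B) (A * Y * B) =
      ((1 : Matrix (Fin 2) (Fin 2) ℂ) ⊗ₖ (Bᴴ ⊗ₖ Aᴴᵀ)) * Hmat X Y *
        ((1 : Matrix (Fin 2) (Fin 2) ℂ) ⊗ₖ (B ⊗ₖ Aᵀ)) := by
  have family_mul : ![A * X * B, A * Y * B] = fun i => A * ![X, Y] i * B :=
    funext <| Fin.forall_fin_two.2 ⟨rfl, rfl⟩
  rw [Hmat_eq_Hfamily, Hmat_eq_Hfamily, family_mul, Hmat_unitary_transform_general hA hB]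
end

section
/- Let Λ = [[α, β],[γ, δ]] be an invertible 2×2 complex matrix. Then for all complex d×d matrices X, Y: H(αX + βY, γX + δY) = (Λ* ⊗ I_{d²}) H(X,Y) (Λᵀ ⊗ I_{d²}), where Λ* is the entrywise complex conjugate and Λᵀ the transpose. -/
open Matrix Kronecker
open scoped ComplexOrder

/-! The block of `H` at a pair of indices depends on the matrix indexing its row conjugate-linearly
and on the matrix indexing its column linearly. Hence replacing the family of matrices by linear
combinations with coefficient matrix `Λ` takes conjugate combinations of the block rows and plain
combinations of the block columns, which is multiplication by `Λ* ⊗ I` on the left and by `Λᵀ ⊗ I`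
on the right. -/

section BlockMatrix

variable {ι κ l m n R : Type*}

theorem kronecker_one_mul_comp [NonAssocSemiring R] [Fintype κ] [Fintype m] [DecidableEq m]
    (A : Matrix ι κ R) (M : Matrix κ l (Matrix m n R)) :
    (A ⊗ₖ (1 : Matrix m m R)) * comp κ l m n R M =
      comp ι l m n R (of fun i j => ∑ k, A i k • M k j) := by
  ext ⟨i, a⟩ ⟨j, b⟩
  simp [mul_apply, Fintype.sum_prod_type, one_apply, Matrix.sum_apply]

theorem comp_mul_kronecker_one [NonAssocSemiring R] [Fintype κ] [Fintype n] [DecidableEq n]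
    (M : Matrix ι κ (Matrix m n R)) (A : Matrix κ l R) :
    comp ι κ m n R M * (A ⊗ₖ (1 : Matrix n n R)) =
      comp ι l m n R (of fun i j => ∑ k, MulOpposite.op (A k j) • M i k) := by
  ext ⟨i, a⟩ ⟨j, b⟩
  simp [mul_apply, Fintype.sum_prod_type, one_apply, Matrix.sum_apply]

variable {S T E F : Type*} [Semiring S] [Semiring T] [CommSemiring R]
  [AddCommMonoid E] [Module S E] [AddCommMonoid F] [Module T F] {σ : S →+* R} {τ : T →+* R}

/-- The Gram-type block matrix of a matrix-valued sesquilinear map `B` along two families of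
vectors, flattened to a matrix of scalars: row and column indices are pairs (block index, index
in block). -/
def sesqBlockMatrix (B : E →ₛₗ[σ] F →ₛₗ[τ] Matrix m n R) (x : ι → E) (y : κ → F) :
    Matrix (ι × m) (κ × n) R :=
  comp ι κ m n R (of fun i j => B (x i) (y j))

theorem sesqBlockMatrix_sum_smul {ι' κ' : Type*} [Fintype ι] [Fintype κ] [Fintype m] [Fintype n]
    [DecidableEq m] [DecidableEq n] (B : E →ₛₗ[σ] F →ₛₗ[τ] Matrix m n R)
    (Λ : Matrix ι' ι S) (M : Matrix κ' κ T) (x : ι → E) (y : κ → F) :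
    sesqBlockMatrix B (fun i => ∑ k, Λ i k • x k) (fun j => ∑ k, M j k • y k) =
      (Λ.map σ ⊗ₖ (1 : Matrix m m R)) * sesqBlockMatrix B x y *
        ((M.map τ)ᵀ ⊗ₖ (1 : Matrix n n R)) := by
  simp only [sesqBlockMatrix, kronecker_one_mul_comp, comp_mul_kronecker_one]
  congr 1
  ext i j : 1
  simp only [of_apply, map_apply, transpose_apply, op_smul_eq_smul, map_sum, map_smulₛₗ,
    LinearMap.sum_apply, LinearMap.smul_apply]

end BlockMatrix

theorem sum_smul_pair {R E : Type*} [Semiring R] [AddCommMonoid E] [Module R E]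
    (α β γ δ : R) (x y : E) :
    (fun k => ∑ i, !![α, β; γ, δ] k i • ![x, y] i) = ![α • x + β • y, γ • x + δ • y] := by
  ext k
  fin_cases k <;> simp

section HMatrix

variable {𝕜 ι κ m n : Type*} [RCLike 𝕜] [Fintype m] [Fintype n] [DecidableEq m] [DecidableEq n]

/-- The sesquilinear map whose values on `X` and `Y` are the blocks of the matrix `H`, that is
`(X, Y) ↦ tr(X†Y) I - ½ (X†Y ⊗ I + I ⊗ X*Yᵀ) + ¼ vec(X)* vec(Y)ᵀ`. -/
noncomputable def hForm : Matrix m n 𝕜 →ₗ⋆[𝕜] Matrix m n 𝕜 →ₗ[𝕜] Matrix (n × m) (n × m) 𝕜 :=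
  LinearMap.mk₂'ₛₗ (starRingEnd 𝕜) (RingHom.id 𝕜)
    (fun X Y => (Xᴴ * Y).trace • 1
      - (1 / 2 : 𝕜) • ((Xᴴ * Y) ⊗ₖ (1 : Matrix m m 𝕜) + (1 : Matrix n n 𝕜) ⊗ₖ (Xᴴᵀ * Yᵀ))
      + (1 / 4 : 𝕜) • vecMulVec (star (vec X)) (vec Y))
    (fun X X' Y => by
      simp only [conjTranspose_add, transpose_add, Matrix.add_mul, trace_add, add_kronecker,
        kronecker_add, vec_add, star_add, add_vecMulVec]
      module)
    (fun c X Y => by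
      simp only [conjTranspose_smul, transpose_smul, Matrix.smul_mul, trace_smul, smul_kronecker,
        kronecker_smul, vec_smul, star_smul, smul_vecMulVec, starRingEnd_apply, smul_eq_mul]
      module)
    (fun X Y Y' => by
      simp only [transpose_add, Matrix.mul_add, trace_add, add_kronecker, kronecker_add, vec_add,
        vecMulVec_add]
      module)
    (fun c X Y => by
      simp only [transpose_smul, Matrix.mul_smul, trace_smul, smul_kronecker, kronecker_smul,
        vec_smul, vecMulVec_smul, RingHom.id_apply, smul_eq_mul]
      module)

/-- The analogue of `H(X, Y)` for an arbitrary family of rectangular matrices in place of the pair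
`(X, Y)`. -/
noncomputable def hFamily (X : ι → Matrix m n 𝕜) : Matrix (ι × n × m) (ι × n × m) 𝕜 :=
  sesqBlockMatrix hForm X X

theorem Hmat_eq_hFamily {d : ℕ} (X Y : Matrix (Fin d) (Fin d) ℂ) :
    Hmat X Y = hFamily ![X, Y] := by
  ext ⟨i, a, b⟩ ⟨j, a', b'⟩
  simp [Hmat, vecCol, hFamily, sesqBlockMatrix, hForm, one_apply, vecMulVec_apply, mul_add]

theorem Hmat_GL2_transform_general [Fintype ι] (Λ : Matrix κ ι 𝕜) (X : ι → Matrix m n 𝕜) :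
    hFamily (fun k => ∑ i, Λ k i • X i) =
      (Λᴴᵀ ⊗ₖ (1 : Matrix (n × m) (n × m) 𝕜)) * hFamily X *
        (Λᵀ ⊗ₖ (1 : Matrix (n × m) (n × m) 𝕜)) :=
  sesqBlockMatrix_sum_smul hForm Λ Λ X X

end HMatrix

/-- For an invertible `Λ = [[α,β],[γ,δ]]`:
`H(αX+βY, γX+δY) = (Λ* ⊗ I_{d²}) H(X,Y) (Λᵀ ⊗ I_{d²})`. -/
theorem Hmat_GL2_transform (d : ℕ) (α β γ δ : ℂ) (h : α * δ - β * γ ≠ 0)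
    (X Y : Matrix (Fin d) (Fin d) ℂ) :
    Hmat (α • X + β • Y) (γ • X + δ • Y) =
      ((!![α, β; γ, δ])ᴴᵀ ⊗ₖ (1 : Matrix (Fin d × Fin d) (Fin d × Fin d) ℂ)) * Hmat X Y *
        ((!![α, β; γ, δ])ᵀ ⊗ₖ (1 : Matrix (Fin d × Fin d) (Fin d × Fin d) ℂ)) := by
  simpa only [Hmat_eq_hFamily, sum_smul_pair] using
    Hmat_GL2_transform_general !![α, β; γ, δ] ![X, Y]
end

section
/- For all diagonal complex d×d matrices X and Y, the hermitian matrix H(X,Y) is positive semidefinite. -/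
open Matrix Kronecker
open scoped ComplexOrder

/-!
When `X` and `Y` are diagonal, so are all blocks of `H₁`, `H₂` and `H₃`. Let `z k` collect the
`k`-th diagonal entries of the two matrices. At the diagonal position `(a, b)` of the blocks,
`H₁ - ½(H₂ + H₃)` is the sum of the rank-one Gram matrices of the vectors `z k` with weights
`1 - ½[k = a] - ½[k = b] ≥ 0`, while `¼H₄` is a nonnegative multiple of a rank-one Gram matrix.
-/

section Algebra

variable {ι n R : Type*} [Fintype n] [DecidableEq n] [Field R]

variable (R) in
/-- The fraction of the product of the `k`-th diagonal entries of two diagonal matrices that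
`H₁ - ½(H₂ + H₃)` keeps on its diagonal at position `p`: half of it is lost whenever `k` is one of
the two coordinates of `p`. -/
def diagWeight (k : n) (p : n × n) : R :=
  ((if p.1 = k then 0 else 1) + (if p.2 = k then 0 else 1)) / 2

lemma sum_mul_diagWeight [NeZero (2 : R)] (f : n → R) (p : n × n) :
    ∑ k, f k * diagWeight R k p = ∑ k, f k - 1 / 2 * (f p.1 + f p.2) := by
  have sum_ne (i : n) : ∑ k, f k * (if i = k then 0 else 1) = ∑ k, f k - f i := by
    simp [mul_ite, ← Finset.sum_erase_eq_sub, Finset.sum_ite, Finset.filter_ne]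
  simp only [diagWeight, mul_div_assoc', mul_add, ← Finset.sum_div, Finset.sum_add_distrib, sum_ne]
  field_simp
  ring

variable [StarRing R]

/-- The block of `H = H₁ - ½(H₂ + H₃) + ¼H₄` that belongs to the pair `A`, `B`: the matrix `H(X,Y)`
has the blocks `HmatBlock X X`, `HmatBlock X Y`, `HmatBlock Y X` and `HmatBlock Y Y`. -/
def HmatBlock (A B : Matrix n n R) : Matrix (n × n) (n × n) R :=
  (Aᴴ * B).trace • 1 - (1 / 2 : R) • ((Aᴴ * B) ⊗ₖ 1 + 1 ⊗ₖ (Aᴴᵀ * Bᵀ))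
    + (1 / 4 : R) • vecMulVec (star (vec A)) (vec B)

/-- The analogue of `H(X,Y)` for a family of matrices in place of the pair `X`, `Y`, with its blocks
indexed by the members of the family; `H(X,Y)` is the case of the family `![X, Y]`. -/
def HmatFamily (Z : ι → Matrix n n R) : Matrix (ι × n × n) (ι × n × n) R :=
  comp ι ι (n × n) (n × n) R (of fun s t => HmatBlock (Z s) (Z t))

lemma HmatBlock_diagonal [NeZero (2 : R)] (x y : n → R) :
    HmatBlock (diagonal x) (diagonal y) =
      diagonal (fun p => ∑ k, star (x k) * y k * diagWeight R k p) +
        (1 / 4 : R) • vecMulVec (star (vec (diagonal x))) (vec (diagonal y)) := by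
  simp only [HmatBlock, sum_mul_diagWeight, diagonal_conjTranspose, diagonal_transpose,
    diagonal_mul_diagonal, trace_diagonal, ← diagonal_one, diagonal_kronecker_diagonal,
    diagonal_add, diagonal_sub, ← diagonal_smul, Pi.star_apply]
  congr 2
  ext p
  simp

lemma HmatFamily_diagonal [NeZero (2 : R)] (z : ι → n → R) :
    HmatFamily (fun s => diagonal (z s)) =
      ∑ k, vecMulVec (star fun s => z s k) (fun s => z s k) ⊗ₖ diagonal (diagWeight R k) +
        (1 / 4 : R) • vecMulVec (star fun p : ι × n × n => vec (diagonal (z p.1)) p.2)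
          (fun p => vec (diagonal (z p.1)) p.2) := by
  ext ⟨s, p⟩ ⟨t, q⟩
  obtain rfl | hpq := eq_or_ne p q
  · simp [HmatFamily, HmatBlock_diagonal, Matrix.sum_apply, vecMulVec_apply]
  · simp [HmatFamily, HmatBlock_diagonal, Matrix.sum_apply, vecMulVec_apply, hpq]

end Algebra

section Positivity

variable {ι n 𝕜 : Type*} [DecidableEq n] [RCLike 𝕜]

lemma diagWeight_nonneg (k : n) (p : n × n) : 0 ≤ diagWeight 𝕜 k p := by
  unfold diagWeight
  positivity

theorem Hmat_posSemidef_of_diagonal_general [Finite ι] [Fintype n] (Z : ι → Matrix n n 𝕜)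
    (hZ : ∀ s, (Z s).IsDiag) : (HmatFamily Z).PosSemidef := by
  rw [← funext fun s => (hZ s).diagonal_diag, HmatFamily_diagonal]
  refine .add (posSemidef_sum _ fun k _ => ?_) ?_
  · exact (posSemidef_vecMulVec_star_self _).kronecker (.diagonal (diagWeight_nonneg k))
  · exact (posSemidef_vecMulVec_star_self _).smul (by positivity)

end Positivity

lemma Hmat_eq_HmatFamily {d : ℕ} (X Y : Matrix (Fin d) (Fin d) ℂ) :
    Hmat X Y = HmatFamily ![X, Y] :=
  rfl

/-- For all diagonal `X, Y`, the hermitian matrix `H(X,Y)` is positive semidefinite. -/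
theorem Hmat_posSemidef_of_diagonal (d : ℕ) (X Y : Matrix (Fin d) (Fin d) ℂ)
    (hX : X.IsDiag) (hY : Y.IsDiag) :
    (Hmat X Y).PosSemidef := by
  rw [Hmat_eq_HmatFamily]
  exact Hmat_posSemidef_of_diagonal_general _ (Fin.forall_fin_two.2 ⟨hX, hY⟩)
end

section
/- Let d ≥ 3. Suppose that det H(X,Y) ≠ 0 for every generic pair (X,Y) of complex d×d matrices (i.e. every pair with X, Y linearly independent over ℂ and some linear combination αX + βY nonsingular). Then H(X,Y) is positive semidefinite for all complex d×d matrices X, Y (and positive definite for every generic pair). -/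
open Matrix Kronecker
open scoped ComplexOrder

/-!
A continuous family of Hermitian matrices which is invertible on a connected set and positive
definite at one of its points is positive definite on the whole set. The set of generic pairs is
connected and dense: on the complex line through a generic pair and an arbitrary second one,
genericity is the nonvanishing of two polynomials in one variable that are not identically zero,
and `ℂ` minus a countable set is connected and dense. So a single generic pair with `H(X,Y)`
positive definite is enough, and density then gives semidefiniteness for all pairs.

The form of `H(X,Y)` at a pair of matrices `(V, W)` is
`‖C‖² - ½(‖XV + YW‖² + ‖VX + WY‖²) + ¼|tr(VX + WY)|²` with `C = X ⊗ V + Y ⊗ W` and Frobenius norms.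
For diagonal `X` and `Y` the two subtracted norms run over entries of `C`, so that the form is
visibly nonnegative, and three distinct eigenvalues of `Y` make it definite for `X = 1`.
-/

section StrictlyPositive

variable {A : Type*} [CStarAlgebra A] [PartialOrder A] [StarOrderedRing A]

lemma isOpen_setOf_isStrictlyPositive :
    IsOpen {a : selfAdjoint A | IsStrictlyPositive (a : A)} := by
  cases subsingleton_or_nontrivial A
  · exact isOpen_discrete _
  refine Metric.isOpen_iff.2 fun a ha ↦ ?_
  obtain ⟨r, hr, hra⟩ := (CFC.exists_pos_algebraMap_le_iff a.2).2 fun _ ↦ ha.spectrum_pos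
  refine ⟨r, hr, fun b hb ↦ ?_⟩
  have hab : ‖(a - b : A)‖ < r := by rwa [Metric.mem_ball', dist_eq_norm] at hb
  have hle : algebraMap ℝ A (r - ‖(a - b : A)‖) ≤ b :=
    calc algebraMap ℝ A (r - ‖(a - b : A)‖) ≤ a - (a - b) := by
          rw [map_sub]
          exact sub_le_sub hra (a.2.sub b.2).le_algebraMap_norm_self
      _ = b := sub_sub_cancel _ _
  exact (isStrictlyPositive_algebraMap (sub_pos.2 hab)).of_le hle

lemma isStrictlyPositive_of_isPreconnected {T : Type*} [TopologicalSpace T] {S : Set T}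
    (hS : IsPreconnected S) {f : T → A} (hf : Continuous f) (hsa : ∀ t, IsSelfAdjoint (f t))
    (hunit : ∀ t ∈ S, IsUnit (f t)) {s t : T} (hs : s ∈ S) (ht : t ∈ S)
    (hpos : IsStrictlyPositive (f s)) : IsStrictlyPositive (f t) := by
  let U : Set T := {t | IsStrictlyPositive (f t)}
  have hU : IsOpen U :=
    isOpen_setOf_isStrictlyPositive.preimage (hf.subtype_mk (p := (· ∈ selfAdjoint A)) hsa)
  have hclosure : closure U ⊆ {t | 0 ≤ f t} :=
    closure_minimal (fun t ht ↦ ht.nonneg) (isClosed_le continuous_const hf)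
  have hSU : S ⊆ U := hS.subset_of_closure_inter_subset hU ⟨s, hs, hpos⟩
    fun t ht ↦ (hunit t ht.2).isStrictlyPositive (hclosure ht.1)
  exact hSU ht

end StrictlyPositive

section PosDef

open scoped Matrix.Norms.L2Operator MatrixOrder

lemma posDef_of_isPreconnected {n T : Type*} [Fintype n] [DecidableEq n] [TopologicalSpace T]
    {S : Set T} (hS : IsPreconnected S) {M : T → Matrix n n ℂ} (hM : Continuous M)
    (hherm : ∀ t, (M t).IsHermitian) (hdet : ∀ t ∈ S, (M t).det ≠ 0) {s t : T} (hs : s ∈ S)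
    (ht : t ∈ S) (hpos : (M s).PosDef) : (M t).PosDef :=
  (isStrictlyPositive_of_isPreconnected hS hM hherm
    (fun t ht ↦ (isUnit_iff_isUnit_det _).2 (hdet t ht).isUnit) hs ht
    hpos.isStrictlyPositive).posDef

lemma isClosed_setOf_posSemidef {n : Type*} [Finite n] :
    IsClosed {M : Matrix n n ℂ | M.PosSemidef} := by
  classical
  cases nonempty_fintype n
  simpa only [Matrix.nonneg_iff_posSemidef] using CStarAlgebra.isClosed_nonneg (A := Matrix n n ℂ)

end PosDef

section Lines

open AffineMap

variable {E : Type*} [AddCommGroup E] [TopologicalSpace E] [IsTopologicalAddGroup E] {S : Set E}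

lemma isPreconnected_of_countable_lineMap_notMem [Module ℂ E] [ContinuousSMul ℂ E]
    (hS : ∀ p ∈ S, ∀ q ∈ S, {t : ℂ | lineMap p q t ∉ S}.Countable) : IsPreconnected S := by
  refine isPreconnected_of_forall_pair fun p hp q hq ↦ ?_
  have hconn : IsConnected {t : ℂ | lineMap p q t ∉ S}ᶜ :=
    (hS p hp q hq).isConnected_compl_of_one_lt_rank (by simp)
  refine ⟨lineMap p q '' {t : ℂ | lineMap p q t ∉ S}ᶜ, ?_, ⟨0, by simpa using hp, by simp⟩,
    ⟨1, by simpa using hq, by simp⟩, hconn.isPreconnected.image _ (by fun_prop)⟩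
  rintro _ ⟨t, ht, rfl⟩
  exact not_not.1 ht

lemma dense_of_countable_lineMap_notMem {𝕜 : Type*} [NontriviallyNormedField 𝕜] [CompleteSpace 𝕜]
    [Module 𝕜 E] [ContinuousSMul 𝕜 E] {p : E}
    (hp : ∀ q, {t : 𝕜 | lineMap p q t ∉ S}.Countable) : Dense S := by
  intro q
  have hdense : Dense {t : 𝕜 | lineMap p q t ∉ S}ᶜ := (hp q).dense_compl 𝕜
  have hmaps : Set.MapsTo (lineMap p q) {t : 𝕜 | lineMap p q t ∉ S}ᶜ S := fun t ht ↦ not_not.1 ht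
  simpa using map_mem_closure (by fun_prop) (hdense 1) hmaps

end Lines

section GenericPair

open AffineMap

variable {K : Type*} [Field K]

open Polynomial in
lemma finite_setOf_det_lineMap_eq_zero {n : Type*} [Fintype n] [DecidableEq n]
    {A : Matrix n n K} (hA : A.det ≠ 0) (B : Matrix n n K) :
    {t : K | (lineMap A B t).det = 0}.Finite := by
  let p : K[X] := (A.map C + (X : K[X]) • (B - A).map C).det
  have heval (t : K) : p.eval t = (lineMap A B t).det := by
    rw [← coe_evalRingHom, RingHom.map_det]
    congr 1
    ext i j
    simp [lineMap_apply, add_comm]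
  have hp : p ≠ 0 := fun h ↦ hA (by simpa [h] using (heval 0).symm)
  simpa only [IsRoot, heval] using finite_setOfPred_isRoot hp

lemma finite_setOf_not_linearIndependent_lineMap {ι V : Type*} [Finite ι] [AddCommGroup V]
    [Module K V] {v : ι → V} (hv : LinearIndependent K v) (w : ι → V) :
    {t : K | ¬ LinearIndependent K (lineMap v w t : ι → V)}.Finite := by
  classical
  cases nonempty_fintype ι
  obtain ⟨g, hg⟩ := (Fintype.linearCombination K v).exists_leftInverse_of_injective
    (LinearMap.ker_eq_bot.2 hv.fintypeLinearCombination_injective)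
  have hgv : of (g ∘ v) = 1 := by
    ext i j
    have hgi : g (v i) = Pi.single i 1 := by simpa using LinearMap.congr_fun hg (Pi.single i 1)
    simpa [one_eq_pi_single] using congrFun hgi j
  have hfin := finite_setOf_det_lineMap_eq_zero (A := of (g ∘ v)) (by simp [hgv]) (of (g ∘ w))
  refine hfin.subset fun t ht ↦ ?_
  contrapose! ht
  have hline : lineMap (of (g ∘ v)) (of (g ∘ w)) t = of (g ∘ lineMap v w t) := by
    ext i : 1
    simp [lineMap_apply]
  rw [Set.mem_ofPred_eq, hline] at ht
  simpa using LinearIndependent.of_comp g (linearIndependent_rows_of_det_ne_zero ht)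

variable {n : Type*} [Fintype n] [DecidableEq n]

/-- A pair of square matrices is *generic* if it is linearly independent and spans a pencil that
contains a nonsingular matrix. These are the pairs at which `H(X,Y)` is assumed invertible. -/
def IsGenericPair (X Y : Matrix n n K) : Prop :=
  LinearIndependent K ![X, Y] ∧ ∃ α β : K, (α • X + β • Y).det ≠ 0

lemma finite_setOf_not_isGenericPair_lineMap {p : Matrix n n K × Matrix n n K}
    (hp : IsGenericPair p.1 p.2) (q : Matrix n n K × Matrix n n K) :
    {t : K | ¬ IsGenericPair (lineMap p q t).1 (lineMap p q t).2}.Finite := by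
  obtain ⟨hindep, α, β, hdet⟩ := hp
  refine ((finite_setOf_not_linearIndependent_lineMap hindep ![q.1, q.2]).union
    (finite_setOf_det_lineMap_eq_zero hdet (α • q.1 + β • q.2))).subset fun t ht ↦ ?_
  have hpair : lineMap ![p.1, p.2] ![q.1, q.2] t = ![(lineMap p q t).1, (lineMap p q t).2] := by
    ext i : 1
    fin_cases i <;> simp [lineMap_apply]
  have hcomb : lineMap (α • p.1 + β • p.2) (α • q.1 + β • q.2) t =
      α • (lineMap p q t).1 + β • (lineMap p q t).2 := by
    simp only [lineMap_apply_module, Prod.fst_add, Prod.snd_add, Prod.smul_fst, Prod.smul_snd]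
    module
  contrapose! ht
  simp only [Set.mem_union, Set.mem_ofPred_eq, hpair, hcomb, not_or, not_not] at ht ⊢
  exact ⟨ht.1, α, β, ht.2⟩

lemma isPreconnected_setOf_isGenericPair :
    IsPreconnected {p : Matrix n n ℂ × Matrix n n ℂ | IsGenericPair p.1 p.2} :=
  isPreconnected_of_countable_lineMap_notMem fun _ hp q _ ↦
    (finite_setOf_not_isGenericPair_lineMap hp q).countable

lemma dense_setOf_isGenericPair {X Y : Matrix n n ℂ} (hXY : IsGenericPair X Y) :
    Dense {p : Matrix n n ℂ × Matrix n n ℂ | IsGenericPair p.1 p.2} :=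
  dense_of_countable_lineMap_notMem fun q ↦
    (finite_setOf_not_isGenericPair_lineMap (p := (X, Y)) hXY q).countable

lemma isGenericPair_one_diagonal {y : n → K} {k l : n} (hkl : y k ≠ y l) :
    IsGenericPair 1 (diagonal y) := by
  refine ⟨LinearIndependent.pair_iff.2 fun s t hst ↦ ?_, 1, 0, by simp⟩
  have hentry (i : n) : s + t * y i = 0 := by simpa using congrFun₂ hst i i
  have ht : t = 0 := by
    refine (mul_eq_zero.1 ?_).resolve_right (sub_ne_zero.2 hkl)
    linear_combination hentry k - hentry l
  exact ⟨by simpa [ht] using hentry k, ht⟩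

end GenericPair

section Frobenius

open scoped Matrix.Norms.Frobenius

lemma frobenius_norm_sq_eq_sum {m n α : Type*} [Fintype m] [Fintype n] [NormedAddCommGroup α]
    (A : Matrix m n α) : ‖A‖ ^ 2 = ∑ i, ∑ j, ‖A i j‖ ^ 2 := by
  rw [frobenius_norm_def, ← Real.sqrt_eq_rpow, Real.sq_sqrt (by positivity)]
  simp only [Real.rpow_two]

lemma frobenius_norm_sum_sq {ι m n 𝕜 : Type*} [Fintype ι] [Fintype m] [Fintype n] [RCLike 𝕜]
    (A : ι → Matrix m n 𝕜) :
    ((‖∑ i, A i‖ ^ 2 : ℝ) : 𝕜) = ∑ i, ∑ j, ((A i)ᴴ * A j).trace := by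
  have htrace (B : Matrix m n 𝕜) : ((‖B‖ ^ 2 : ℝ) : 𝕜) = (Bᴴ * B).trace := by
    rw [frobenius_norm_sq_eq_sum, Finset.sum_comm]
    simp [Matrix.trace, Matrix.mul_apply, RCLike.conj_mul]
  simp only [htrace, conjTranspose_sum, Matrix.sum_mul, Matrix.mul_sum, trace_sum]
  exact Finset.sum_comm

end Frobenius

section Hmat

open scoped Matrix.Norms.Frobenius

variable {d : ℕ}

lemma continuous_Hmat :
    Continuous fun p : Matrix (Fin d) (Fin d) ℂ × Matrix (Fin d) (Fin d) ℂ ↦ Hmat p.1 p.2 := by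
  refine continuous_matrix fun i j ↦ ?_
  have hpair (k : Fin 2) : Continuous
      fun p : Matrix (Fin d) (Fin d) ℂ × Matrix (Fin d) (Fin d) ℂ ↦ ![p.1, p.2] k := by
    fin_cases k
    exacts [continuous_fst, continuous_snd]
  have := hpair i.1
  have := hpair j.1
  simp only [Hmat, of_apply, vecCol, Matrix.trace, Matrix.diag, Matrix.mul_apply,
    conjTranspose_apply, transpose_apply]
  fun_prop

lemma Hmat_block_mulVec (X Y W : Matrix (Fin d) (Fin d) ℂ) (i j : Fin 2) (c : Fin d × Fin d) :
    ∑ c', Hmat X Y (i, c) (j, c') * W c'.1 c'.2 =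
      (((![X, Y] i)ᴴ * ![X, Y] j).trace • W
        - (1 / 2 : ℂ) • ((![X, Y] i)ᴴ * (![X, Y] j * W) + W * ![X, Y] j * (![X, Y] i)ᴴ)
        + (1 / 4 : ℂ) • (W * ![X, Y] j).trace • (![X, Y] i)ᴴ) c.1 c.2 := by
  simp only [Hmat, of_apply]
  generalize ![X, Y] i = P
  generalize ![X, Y] j = Q
  have h₁ : ∑ c', (Pᴴ * Q).trace * (if c = c' then 1 else 0) * W c'.1 c'.2 =
      (Pᴴ * Q).trace * W c.1 c.2 := by simp
  have h₂ : ∑ c' : Fin d × Fin d,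
      (Pᴴ * Q) c.1 c'.1 * (if c.2 = c'.2 then 1 else 0) * W c'.1 c'.2 =
      (Pᴴ * (Q * W)) c.1 c.2 := by
    rw [← Matrix.mul_assoc, Matrix.mul_apply]
    simp [Fintype.sum_prod_type]
  have h₃ : ∑ c' : Fin d × Fin d,
      (if c.1 = c'.1 then 1 else 0) * (Pᴴᵀ * Qᵀ) c.2 c'.2 * W c'.1 c'.2 =
      (W * Q * Pᴴ) c.1 c.2 := by
    rw [Matrix.mul_assoc, Matrix.mul_apply, ← transpose_mul]
    simp [Fintype.sum_prod_type_right, mul_comm]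
  have h₄ : ∑ c', starRingEnd ℂ (vecCol P c) * vecCol Q c' * W c'.1 c'.2 =
      (W * Q).trace * Pᴴ c.1 c.2 := by
    simp only [mul_assoc, ← Finset.mul_sum]
    simp [Matrix.trace, Matrix.mul_apply, vecCol, Fintype.sum_prod_type, mul_comm]
  simp only [Matrix.add_apply, Matrix.sub_apply, Matrix.smul_apply, smul_eq_mul,
    ← h₁, ← h₂, ← h₃, ← h₄, Finset.mul_sum, ← Finset.sum_add_distrib, ← Finset.sum_sub_distrib]
  exact Finset.sum_congr rfl fun c' _ ↦ by ring

lemma Hmat_block_form (X Y V W : Matrix (Fin d) (Fin d) ℂ) (i j : Fin 2) :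
    ∑ c, star (V c.1 c.2) * ∑ c', Hmat X Y (i, c) (j, c') * W c'.1 c'.2 =
      ((![X, Y] i ⊗ₖ V)ᴴ * (![X, Y] j ⊗ₖ W)).trace
        - (((![X, Y] i * V)ᴴ * (![X, Y] j * W)).trace
          + ((V * ![X, Y] i)ᴴ * (W * ![X, Y] j)).trace) / 2
        + star (V * ![X, Y] i).trace * (W * ![X, Y] j).trace / 4 := by
  have htrace (U : Matrix (Fin d) (Fin d) ℂ) :
      ∑ c : Fin d × Fin d, star (V c.1 c.2) * U c.1 c.2 = (Vᴴ * U).trace := by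
    simp [Matrix.trace, Matrix.mul_apply, Fintype.sum_prod_type_right]
  simp only [Hmat_block_mulVec, htrace]
  generalize ![X, Y] i = P
  generalize ![X, Y] j = Q
  have hcycle : ((V * P)ᴴ * (W * Q)).trace = (Vᴴ * (W * Q * Pᴴ)).trace := by
    rw [conjTranspose_mul, Matrix.mul_assoc, trace_mul_comm, Matrix.mul_assoc]
  rw [conjTranspose_kronecker, ← mul_kronecker_mul, trace_kronecker, hcycle, conjTranspose_mul P,
    Matrix.mul_assoc Vᴴ, ← trace_conjTranspose, conjTranspose_mul, trace_mul_comm Pᴴ Vᴴ]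
  simp only [Matrix.mul_add, Matrix.mul_sub, Matrix.mul_smul, trace_add, trace_sub, trace_smul,
    smul_eq_mul]
  ring

lemma dotProduct_Hmat_mulVec (X Y : Matrix (Fin d) (Fin d) ℂ)
    (V : Fin 2 → Matrix (Fin d) (Fin d) ℂ) :
    star (fun p ↦ V p.1 p.2.1 p.2.2) ⬝ᵥ Hmat X Y *ᵥ (fun p ↦ V p.1 p.2.1 p.2.2) =
      ((‖∑ i, ![X, Y] i ⊗ₖ V i‖ ^ 2
        - (‖∑ i, ![X, Y] i * V i‖ ^ 2 + ‖∑ i, V i * ![X, Y] i‖ ^ 2) / 2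
        + ‖∑ i, (V i * ![X, Y] i).trace‖ ^ 2 / 4 : ℝ) : ℂ) := by
  have htrace : ((‖∑ i, (V i * ![X, Y] i).trace‖ ^ 2 : ℝ) : ℂ) =
      ∑ i, ∑ j, star (V i * ![X, Y] i).trace * (V j * ![X, Y] j).trace := by
    rw [Complex.ofReal_pow, ← Complex.conj_mul', map_sum, Finset.sum_mul_sum]
    rfl
  have hnorm {m n : Type} [Fintype m] [Fintype n] (A : Fin 2 → Matrix m n ℂ) :
      ((‖∑ i, A i‖ ^ 2 : ℝ) : ℂ) = ∑ i, ∑ j, ((A i)ᴴ * A j).trace := frobenius_norm_sum_sq A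
  calc star (fun p ↦ V p.1 p.2.1 p.2.2) ⬝ᵥ Hmat X Y *ᵥ (fun p ↦ V p.1 p.2.1 p.2.2)
      = ∑ i, ∑ j, ∑ c, star (V i c.1 c.2) * ∑ c', Hmat X Y (i, c) (j, c') * V j c'.1 c'.2 := by
        simp only [dotProduct, mulVec, Fintype.sum_prod_type (α₁ := Fin 2), Finset.mul_sum]
        exact Finset.sum_congr rfl fun i _ ↦ Finset.sum_comm
    _ = _ := by
        simp only [Hmat_block_form, Complex.ofReal_add, Complex.ofReal_sub, Complex.ofReal_div,
          hnorm, htrace, Finset.sum_add_distrib, Finset.sum_sub_distrib, ← Finset.sum_div,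
          Complex.ofReal_ofNat]

lemma isHermitian_Hmat (X Y : Matrix (Fin d) (Fin d) ℂ) : (Hmat X Y).IsHermitian := by
  rw [← isSymmetric_toEuclideanLin_iff, LinearMap.isSymmetric_iff_inner_map_self_real]
  intro v
  have hform := dotProduct_Hmat_mulVec X Y fun i ↦ of fun a b ↦ v (i, a, b)
  rw [inner_conj_symm, ← inner_conj_symm _ v, EuclideanSpace.inner_eq_star_dotProduct,
    ofLp_toLpLin, toLin'_apply, dotProduct_comm]
  simp only [of_apply, Prod.mk.eta] at hform
  rw [hform, Complex.conj_ofReal]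

lemma dotProduct_Hmat_diagonal_mulVec (x y : Fin d → ℂ) (V : Fin 2 → Matrix (Fin d) (Fin d) ℂ) :
    star (fun p ↦ V p.1 p.2.1 p.2.2) ⬝ᵥ
        Hmat (diagonal x) (diagonal y) *ᵥ (fun p ↦ V p.1 p.2.1 p.2.2) =
      ((∑ a, ∑ b, (∑ k ∈ Finset.univ.erase a, ‖x k * V 0 a b + y k * V 1 a b‖ ^ 2
          + ∑ k ∈ Finset.univ.erase b, ‖x k * V 0 a b + y k * V 1 a b‖ ^ 2) / 2
        + ‖∑ a, (x a * V 0 a a + y a * V 1 a a)‖ ^ 2 / 4 : ℝ) : ℂ) := by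
  let u (a b k : Fin d) : ℂ := x k * V 0 a b + y k * V 1 a b
  have hkronecker : ‖diagonal x ⊗ₖ V 0 + diagonal y ⊗ₖ V 1‖ ^ 2 = ∑ a, ∑ b, ∑ k, ‖u a b k‖ ^ 2 := by
    have hentry (k a l b : Fin d) : (diagonal x ⊗ₖ V 0 + diagonal y ⊗ₖ V 1) (k, a) (l, b) =
        if k = l then u a b k else 0 := by
      simp [diagonal_apply, ite_add_ite, u]
    rw [frobenius_norm_sq_eq_sum]
    simp only [Fintype.sum_prod_type_right, hentry, apply_ite, norm_zero, ite_pow, ne_eq,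
      OfNat.ofNat_ne_zero, not_false_eq_true, zero_pow, Finset.sum_ite_eq, Finset.mem_univ,
      ↓reduceIte]
    exact Finset.sum_congr rfl fun a _ ↦ Finset.sum_comm
  have hleft : ‖diagonal x * V 0 + diagonal y * V 1‖ ^ 2 = ∑ a, ∑ b, ‖u a b a‖ ^ 2 := by
    simp [frobenius_norm_sq_eq_sum, u]
  have hright : ‖V 0 * diagonal x + V 1 * diagonal y‖ ^ 2 = ∑ a, ∑ b, ‖u a b b‖ ^ 2 := by
    simp [frobenius_norm_sq_eq_sum, u, mul_comm]
  have htrace : (V 0 * diagonal x).trace + (V 1 * diagonal y).trace = ∑ a, u a a a := by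
    simp [Matrix.trace, u, mul_comm, Finset.sum_add_distrib]
  rw [dotProduct_Hmat_mulVec]
  simp only [Fin.sum_univ_two, cons_val_zero, cons_val_one, hkronecker, hleft, hright, htrace,
    Finset.sum_erase_eq_sub, Finset.mem_univ, ← Finset.sum_add_distrib, ← Finset.sum_sub_distrib,
    Finset.sum_div, u]
  congr 2
  exact Finset.sum_congr rfl fun a _ ↦ Finset.sum_congr rfl fun b _ ↦ by ring

lemma exists_ne_add_mul_ne_zero {ι K : Type*} [Field K] {x y : ι → K} {a k l : ι}
    (hk : k ≠ a) (hl : l ≠ a) (hkl : x k * y l ≠ x l * y k) {r s : K} (hrs : r ≠ 0 ∨ s ≠ 0) :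
    ∃ m ≠ a, x m * r + y m * s ≠ 0 := by
  by_contra! hzero
  have hr : (x k * y l - x l * y k) * r = 0 := by
    linear_combination y l * hzero k hk - y k * hzero l hl
  have hs : (x k * y l - x l * y k) * s = 0 := by
    linear_combination x k * hzero l hl - x l * hzero k hk
  exact hrs.elim (mul_ne_zero (sub_ne_zero.2 hkl) · hr) (mul_ne_zero (sub_ne_zero.2 hkl) · hs)

lemma posDef_Hmat_diagonal {x y : Fin d → ℂ}
    (hxy : ∀ a, ∃ k ≠ a, ∃ l ≠ a, x k * y l ≠ x l * y k) :
    (Hmat (diagonal x) (diagonal y)).PosDef := by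
  refine .of_dotProduct_mulVec_pos (isHermitian_Hmat _ _) fun v hv ↦ ?_
  obtain ⟨V, rfl⟩ : ∃ V : Fin 2 → Matrix (Fin d) (Fin d) ℂ, v = fun p ↦ V p.1 p.2.1 p.2.2 :=
    ⟨fun i a b ↦ v (i, a, b), rfl⟩
  rw [dotProduct_Hmat_diagonal_mulVec, Complex.zero_lt_real]
  let q (c a b : Fin d) : ℝ := ∑ k ∈ Finset.univ.erase c, ‖x k * V 0 a b + y k * V 1 a b‖ ^ 2
  have hq (c a b : Fin d) : 0 ≤ q c a b := Finset.sum_nonneg fun _ _ ↦ sq_nonneg _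
  suffices hpos : ∃ a b, 0 < q a a b by
    obtain ⟨a, b, hab⟩ := hpos
    have hterm (a b : Fin d) : 0 ≤ (q a a b + q b a b) / 2 := by linarith [hq a a b, hq b a b]
    refine add_pos_of_pos_of_nonneg ?_ (by positivity)
    refine Finset.sum_pos' (fun a _ ↦ Finset.sum_nonneg fun b _ ↦ hterm a b)
      ⟨a, Finset.mem_univ a, ?_⟩
    refine Finset.sum_pos' (fun b _ ↦ hterm a b) ⟨b, Finset.mem_univ b, ?_⟩
    linarith [hq b a b]
  obtain ⟨⟨i, a, b⟩, hi : V i a b ≠ 0⟩ := Function.ne_iff.1 hv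
  have hV : V 0 a b ≠ 0 ∨ V 1 a b ≠ 0 := by
    fin_cases i
    exacts [.inl hi, .inr hi]
  obtain ⟨k, hk, l, hl, hkl⟩ := hxy a
  obtain ⟨m, hma, hm⟩ := exists_ne_add_mul_ne_zero hk hl hkl hV
  exact ⟨a, b, Finset.sum_pos' (fun _ _ ↦ sq_nonneg _)
    ⟨m, Finset.mem_erase.2 ⟨hma, Finset.mem_univ m⟩, by positivity⟩⟩

lemma exists_isGenericPair_posDef_Hmat (hd : 3 ≤ d) :
    ∃ X Y : Matrix (Fin d) (Fin d) ℂ, IsGenericPair X Y ∧ (Hmat X Y).PosDef := by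
  let y (k : Fin d) : ℂ := (k : ℕ)
  have hy : Function.Injective y := Nat.cast_injective.comp Fin.val_injective
  have hpair (a : Fin d) : ∃ k ≠ a, ∃ l ≠ a, k ≠ l := by
    have hcard : 1 < (Finset.univ.erase a).card := by simp; lia
    simpa using Finset.one_lt_card.1 hcard
  obtain ⟨k, -, l, -, hkl⟩ := hpair ⟨0, by lia⟩
  refine ⟨1, diagonal y, isGenericPair_one_diagonal (hy.ne hkl), ?_⟩
  rw [← diagonal_one]
  refine posDef_Hmat_diagonal fun a ↦ ?_
  obtain ⟨k, hk, l, hl, hkl⟩ := hpair a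
  exact ⟨k, hk, l, hl, by simpa using hy.ne hkl.symm⟩

end Hmat

/-- Let `d ≥ 3`. If `det H(X,Y) ≠ 0` for every generic pair `(X,Y)` (i.e. `X, Y` linearly
independent with some linear combination nonsingular), then `H(X,Y)` is positive
semidefinite for all `X, Y`, and positive definite for every generic pair. -/
theorem Hmat_posSemidef_of_det_ne_zero_on_generic (d : ℕ) (hd : 3 ≤ d)
    (hgen : ∀ X Y : Matrix (Fin d) (Fin d) ℂ,
      (LinearIndependent ℂ ![X, Y] ∧ ∃ α β : ℂ, (α • X + β • Y).det ≠ 0) →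
        (Hmat X Y).det ≠ 0) :
    (∀ X Y : Matrix (Fin d) (Fin d) ℂ, (Hmat X Y).PosSemidef) ∧
    (∀ X Y : Matrix (Fin d) (Fin d) ℂ,
      (LinearIndependent ℂ ![X, Y] ∧ ∃ α β : ℂ, (α • X + β • Y).det ≠ 0) →
        (Hmat X Y).PosDef) := by
  obtain ⟨X₀, Y₀, hgen₀, hpos₀⟩ := exists_isGenericPair_posDef_Hmat hd
  have hposDef (X Y : Matrix (Fin d) (Fin d) ℂ) (hXY : IsGenericPair X Y) : (Hmat X Y).PosDef :=
    posDef_of_isPreconnected isPreconnected_setOf_isGenericPair continuous_Hmat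
      (fun p ↦ isHermitian_Hmat p.1 p.2) (fun p hp ↦ hgen p.1 p.2 hp)
      (s := (X₀, Y₀)) (t := (X, Y)) hgen₀ hXY hpos₀
  have hclosed : IsClosed {p : Matrix (Fin d) (Fin d) ℂ × Matrix (Fin d) (Fin d) ℂ |
      (Hmat p.1 p.2).PosSemidef} := isClosed_setOf_posSemidef.preimage continuous_Hmat
  have hposSemidef : ∀ p : Matrix (Fin d) (Fin d) ℂ × Matrix (Fin d) (Fin d) ℂ,
      (Hmat p.1 p.2).PosSemidef :=
    (dense_setOf_isGenericPair hgen₀).induction (fun p hp ↦ (hposDef p.1 p.2 hp).posSemidef)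
      hclosed
  exact ⟨fun X Y ↦ hposSemidef (X, Y), hposDef⟩
end

section
/- For every complex d×d matrix X, the d²×d² hermitian matrix ‖X‖² I_{d²} − (1/2)(X†X ⊗ I_d) − (1/2)(I_d ⊗ X*Xᵀ) + (1/4) vec(X)* vec(X)ᵀ is positive semidefinite, where vec(X) ∈ ℂ^{d²} is the column vector obtained by stacking the columns of X and X* is the entrywise complex conjugate. (This matrix is a diagonal d²×d² block of H(X,Y); equivalently, Φ(X,Y,U,0) ≥ 0 for all U.) -/
open Matrix Kronecker
open scoped ComplexOrder

/-- Squared Frobenius norm `‖M‖² = tr(M†M)` (a real number). -/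
noncomputable def frob2 {n : Type*} [Fintype n] (M : Matrix n n ℂ) : ℝ :=
  ((Mᴴ * M).trace).re

/-! A positive semidefinite matrix satisfies `A ≤ (tr A) I`, since each of its nonnegative
eigenvalues is at most the sum of all of them. Apply this to `X†X` and to `X*Xᵀ`, both of trace
`‖X‖²`, tensor with the identity and average; the rank-one term only adds something positive. -/

section Kronecker

variable {l m n p R : Type*} [NonUnitalNonAssocRing R]

theorem sub_kronecker (A₁ A₂ : Matrix l m R) (B : Matrix n p R) :
    (A₁ - A₂) ⊗ₖ B = A₁ ⊗ₖ B - A₂ ⊗ₖ B :=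
  eq_sub_of_add_eq <| by rw [← add_kronecker, sub_add_cancel]

theorem kronecker_sub (A : Matrix l m R) (B₁ B₂ : Matrix n p R) :
    A ⊗ₖ (B₁ - B₂) = A ⊗ₖ B₁ - A ⊗ₖ B₂ :=
  eq_sub_of_add_eq <| by rw [← kronecker_add, sub_add_cancel]

end Kronecker

section PosSemidef

variable {m n 𝕜 : Type*} [RCLike 𝕜] [Fintype m] [Fintype n]

theorem ofReal_re_trace_of_posSemidef {A : Matrix n n 𝕜} (hA : A.PosSemidef) :
    (RCLike.re A.trace : 𝕜) = A.trace :=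
  RCLike.conj_eq_iff_re.mp hA.trace_nonneg.isSelfAdjoint

theorem eigenvalues_le_re_trace [DecidableEq n] {A : Matrix n n 𝕜} (hA : A.PosSemidef) (i : n) :
    hA.isHermitian.eigenvalues i ≤ RCLike.re A.trace := by
  rw [hA.isHermitian.trace_eq_sum_eigenvalues, ← RCLike.ofReal_sum, RCLike.ofReal_re]
  exact Finset.single_le_sum (fun j _ ↦ hA.eigenvalues_nonneg j) (Finset.mem_univ i)

open scoped MatrixOrder in
theorem posSemidef_trace_smul_one_sub [DecidableEq n] {A : Matrix n n 𝕜} (hA : A.PosSemidef) :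
    (A.trace • (1 : Matrix n n 𝕜) - A).PosSemidef := by
  have hle : A ≤ algebraMap ℝ (Matrix n n 𝕜) (RCLike.re A.trace) := by
    refine le_algebraMap_of_spectrum_le ?_ hA.isHermitian
    rw [hA.isHermitian.spectrum_real_eq_range_eigenvalues]
    exact Set.forall_mem_range.mpr (eigenvalues_le_re_trace hA)
  rwa [IsScalarTower.algebraMap_apply ℝ 𝕜, Algebra.algebraMap_eq_smul_one,
    RCLike.algebraMap_eq_ofReal, ofReal_re_trace_of_posSemidef hA, le_iff] at hle

theorem posSemidef_add_trace_smul_one_sub_kronecker_one_sub_one_kronecker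
    [DecidableEq m] [DecidableEq n]
    {A : Matrix n n 𝕜} {B : Matrix m m 𝕜} (hA : A.PosSemidef) (hB : B.PosSemidef) :
    ((A.trace + B.trace) • (1 : Matrix (n × m) (n × m) 𝕜)
      - A ⊗ₖ (1 : Matrix m m 𝕜) - (1 : Matrix n n 𝕜) ⊗ₖ B).PosSemidef := by
  have hleft := (posSemidef_trace_smul_one_sub hA).kronecker (PosSemidef.one (n := m))
  have hright := (PosSemidef.one (n := n)).kronecker (posSemidef_trace_smul_one_sub hB)
  rw [sub_kronecker, smul_kronecker, one_kronecker_one] at hleft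
  rw [kronecker_sub, kronecker_smul, one_kronecker_one] at hright
  convert hleft.add hright using 1
  module

theorem trace_conjTranspose_transpose_mul_transpose {R : Type*} [CommSemiring R] [Star R]
    (X : Matrix m n R) : (Xᴴᵀ * Xᵀ).trace = (Xᴴ * X).trace := by
  rw [← transpose_mul, trace_transpose, trace_mul_comm]

theorem diagonal_block_posSemidef_general [DecidableEq m] [DecidableEq n] (X : Matrix m n 𝕜)
    {c : 𝕜} (hc : 0 ≤ c) :
    ((Xᴴ * X).trace • (1 : Matrix (n × m) (n × m) 𝕜)
      - (1 / 2 : 𝕜) • ((Xᴴ * X) ⊗ₖ (1 : Matrix m m 𝕜))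
      - (1 / 2 : 𝕜) • ((1 : Matrix n n 𝕜) ⊗ₖ (Xᴴᵀ * Xᵀ))
      + c • vecMulVec (star (vec X)) (vec X)).PosSemidef := by
  have hconj : (Xᴴᵀ * Xᵀ).PosSemidef := posSemidef_conjTranspose_mul_self Xᵀ
  have hsum := posSemidef_add_trace_smul_one_sub_kronecker_one_sub_one_kronecker
    (posSemidef_conjTranspose_mul_self X) hconj
  rw [trace_conjTranspose_transpose_mul_transpose] at hsum
  have hhalf : (0 : 𝕜) ≤ 1 / 2 := by positivity
  convert (hsum.smul hhalf).add ((posSemidef_vecMulVec_star_self (vec X)).smul hc) using 1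
  module

end PosSemidef

theorem ofReal_frob2 {n : Type*} [Fintype n] (M : Matrix n n ℂ) :
    (frob2 M : ℂ) = (Mᴴ * M).trace :=
  ofReal_re_trace_of_posSemidef (posSemidef_conjTranspose_mul_self M)

/-- For every `X`, the `d²×d²` hermitian matrix
`‖X‖² I - ½(X†X ⊗ I_d) - ½(I_d ⊗ X*Xᵀ) + ¼ vec(X)* vec(X)ᵀ` is positive semidefinite. -/
theorem diagonal_block_posSemidef (d : ℕ) (X : Matrix (Fin d) (Fin d) ℂ) :
    (((frob2 X : ℂ)) • (1 : Matrix (Fin d × Fin d) (Fin d × Fin d) ℂ)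
      - (1 / 2 : ℂ) • ((Xᴴ * X) ⊗ₖ (1 : Matrix (Fin d) (Fin d) ℂ))
      - (1 / 2 : ℂ) • ((1 : Matrix (Fin d) (Fin d) ℂ) ⊗ₖ (Xᴴᵀ * Xᵀ))
      + (1 / 4 : ℂ) • vecMulVec (star (vecCol X)) (vecCol X)).PosSemidef := by
  rw [ofReal_frob2]
  exact diagonal_block_posSemidef_general X (c := 1 / 4) (by positivity)
end
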